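/- Let U : ℝ × ℝ → ℂ be a C^∞ function satisfying the Kaup–Kupershmidt equation ∂_τ U = 5 U² ∂_x U + (25/2) (∂_x U)(∂_x² U) + 5 U ∂_x³ U + ∂_x⁵ U everywhere. For ε > 0 define u_ε : ℤ × ℝ → ℂ by u_ε(n,t) := (2√2/3) i − ( i / (18√2) ) ε² U( εn − (4/9) ε t, (2/135) ε⁵ t ), where i is the imaginary unit. Then for each fixed (n,t) ∈ ℤ × ℝ, as ε → 0⁺: ∂_t u_ε(n,t) − ( 1 + u_ε(n,t)² ) ( u_ε(n+2,t) √(1 + u_ε(n+1,t)²) − u_ε(n−2,t) √(1 + u_ε(n−1,t)²) ) = o(ε⁷), where √ denotes the principal branch of the complex square root (note 1 + u_ε² → 1/9 as ε → 0, so the principal branch is well defined for small ε). That is, the discrete Kaup–Kupershmidt equation has the Kaup–Kupershmidt equation as its continuous limit. -/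

import Mathlib

/-! The proof is a Taylor expansion in `ε`, organised as a divisibility statement.

Put `w_k = U(x_ε + kε, τ_ε) / 24` with `x_ε = ε (n - 4t/9)`, `τ_ε = (2/135) ε⁵ t`. Then
`u_ε(n+k,t) = (2√2/3) i (1 - ε² w_k)` and `1 + u_ε² = (1 + 16 W - 8 W²) / 9` with `W = ε² w_k`,
so that up to the constant factor `(2√2/3) i / 27` the residue is a polynomial with integer
coefficients in `ε`, the `w_k`, the two square roots and the derivatives of `U` at `(x_ε, τ_ε)`.

Two analytic inputs are needed: a Taylor formula for `U` in the space variable, uniform in the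
base point (`exists_taylor_bound`), and the expansion
`√(1 + 16 W - 8 W²) = 1 + 8 W - 36 W² + 288 W³ + O(W⁴)` (`sqrt_expansion`). All functions
involved lie in the ring of functions of `ε` bounded as `ε → 0⁺`, where these two facts read as
congruences modulo `ε⁶` and `ε⁸`. The rest is algebra valid in any commutative ring: the residue
is divisible by `ε⁸` (`residue_dvd`). The orders `ε³` and `ε⁵` cancel because of the choice
of the constants, and the order `ε⁷` is the Kaup–Kupershmidt equation.
-/


open Asymptotics

/-- Spatial derivative `∂_x` of a function `U(x, τ)`. -/
noncomputable def dX (U : ℝ → ℝ → ℂ) : ℝ → ℝ → ℂ := fun x τ => deriv (fun y => U y τ) x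

/-- The discrete profile `u_ε(n,t) = (2√2/3)i − (i/(18√2)) ε² U(εn − (4/9)εt, (2/135)ε⁵t)`. -/
noncomputable def uEps (U : ℝ → ℝ → ℂ) (ε : ℝ) (n : ℤ) (t : ℝ) : ℂ :=
  (2 * Real.sqrt 2 / 3 : ℝ) * Complex.I
    - (Complex.I / (18 * Real.sqrt 2 : ℝ)) * (ε : ℂ)^2
        * U (ε * (n : ℝ) - (4/9) * ε * t) ((2/135) * ε^5 * t)

open Filter Topology

/-! ### Algebra: the residue modulo `e ^ 8` -/

/-- Here `w1, w2, v1, v2` stand for the values at the nodes `1, 2, -1, -2`, the coefficients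
`c_j` play the role of `∂_x^j U / (24 j!)`, and `S, T` are the square roots at the nodes `±1`. The
first two terms of the conclusion are `-27 ∂_t W`, with `∂_τ U` eliminated by the
Kaup–Kupershmidt equation. -/
lemma residue_dvd {R : Type*} [CommRing R] (e c0 c1 c2 c3 c4 c5 w1 w2 v1 v2 S T : R)
    (h1 : e ^ 6 ∣ w1 - (c0 + e * c1 + e ^ 2 * c2 + e ^ 3 * c3 + e ^ 4 * c4 + e ^ 5 * c5))
    (h2 : e ^ 6 ∣ w2 - (c0 + 2 * e * c1 + 4 * e ^ 2 * c2 + 8 * e ^ 3 * c3 + 16 * e ^ 4 * c4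
      + 32 * e ^ 5 * c5))
    (h3 : e ^ 6 ∣ v1 - (c0 - e * c1 + e ^ 2 * c2 - e ^ 3 * c3 + e ^ 4 * c4 - e ^ 5 * c5))
    (h4 : e ^ 6 ∣ v2 - (c0 - 2 * e * c1 + 4 * e ^ 2 * c2 - 8 * e ^ 3 * c3 + 16 * e ^ 4 * c4
      - 32 * e ^ 5 * c5))
    (hS : e ^ 8 ∣ S - (1 + 8 * (e ^ 2 * w1) - 36 * (e ^ 2 * w1) ^ 2 + 288 * (e ^ 2 * w1) ^ 3))
    (hT : e ^ 8 ∣ T - (1 + 8 * (e ^ 2 * v1) - 36 * (e ^ 2 * v1) ^ 2 + 288 * (e ^ 2 * v1) ^ 3)) :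
    e ^ 8 ∣ 12 * e ^ 3 * c1
      - e ^ 7 * (1152 * c0 ^ 2 * c1 + 240 * c1 * c2 + 288 * c0 * c3 + 48 * c5)
      - (1 + 16 * (e ^ 2 * c0) - 8 * (e ^ 2 * c0) ^ 2) *
        ((1 - e ^ 2 * w2) * S - (1 - e ^ 2 * v2) * T) := by
  obtain ⟨r1, h1⟩ := h1
  obtain ⟨r2, h2⟩ := h2
  obtain ⟨r3, h3⟩ := h3
  obtain ⟨r4, h4⟩ := h4
  obtain ⟨q, hS⟩ := hS
  obtain ⟨q', hT⟩ := hT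
  have lin : 8 * w1 - w2 - 8 * v1 + v2
      = 12 * e * c1 - 48 * e ^ 5 * c5 + e ^ 6 * (8 * r1 - r2 - 8 * r3 + r4) := by
    linear_combination 8 * h1 - h2 - 8 * h3 + h4
  have quad : ∃ g, -8 * w1 * w2 - 36 * w1 ^ 2 + 8 * v1 * v2 + 36 * v1 ^ 2
      = -192 * e * c0 * c1 - e ^ 3 * (288 * c0 * c3 + 240 * c1 * c2) + e ^ 4 * g := by
    -- only the Taylor polynomials of degree three matter here
    obtain ⟨s1, k1⟩ : ∃ s, w1 = c0 + e * c1 + e ^ 2 * c2 + e ^ 3 * c3 + e ^ 4 * s :=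
      ⟨c4 + e * c5 + e ^ 2 * r1, by linear_combination h1⟩
    obtain ⟨s2, k2⟩ : ∃ s, w2 = c0 + 2 * e * c1 + 4 * e ^ 2 * c2 + 8 * e ^ 3 * c3 + e ^ 4 * s :=
      ⟨16 * c4 + 32 * e * c5 + e ^ 2 * r2, by linear_combination h2⟩
    obtain ⟨s3, k3⟩ : ∃ s, v1 = c0 - e * c1 + e ^ 2 * c2 - e ^ 3 * c3 + e ^ 4 * s :=
      ⟨c4 - e * c5 + e ^ 2 * r3, by linear_combination h3⟩
    obtain ⟨s4, k4⟩ : ∃ s, v2 = c0 - 2 * e * c1 + 4 * e ^ 2 * c2 - 8 * e ^ 3 * c3 + e ^ 4 * s :=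
      ⟨16 * c4 - 32 * e * c5 + e ^ 2 * r4, by linear_combination h4⟩
    refine ⟨-336 * e * c2 * c3 - 8 * (s1 * w2 + w1 * s2 - e ^ 4 * s1 * s2)
      - 36 * (2 * s1 * w1 - e ^ 4 * s1 ^ 2) + 8 * (s3 * v2 + v1 * s4 - e ^ 4 * s3 * s4)
      + 36 * (2 * s3 * v1 - e ^ 4 * s3 ^ 2), ?_⟩
    rw [k1, k2, k3, k4]
    ring
  have cub : ∃ g, 36 * w1 ^ 2 * w2 + 288 * w1 ^ 3 - 36 * v1 ^ 2 * v2 - 288 * v1 ^ 3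
      = 2016 * e * c0 ^ 2 * c1 + e ^ 2 * g := by
    obtain ⟨z1, k1⟩ : ∃ s, w1 = c0 + e * (c1 + e * s) :=
      ⟨c2 + e * c3 + e ^ 2 * c4 + e ^ 3 * c5 + e ^ 4 * r1, by linear_combination h1⟩
    obtain ⟨z2, k2⟩ : ∃ s, w2 = c0 + e * (2 * c1 + e * s) :=
      ⟨4 * c2 + 8 * e * c3 + 16 * e ^ 2 * c4 + 32 * e ^ 3 * c5 + e ^ 4 * r2, by
        linear_combination h2⟩
    obtain ⟨z3, k3⟩ : ∃ s, v1 = c0 + e * (-c1 + e * s) :=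
      ⟨c2 - e * c3 + e ^ 2 * c4 - e ^ 3 * c5 + e ^ 4 * r3, by linear_combination h3⟩
    obtain ⟨z4, k4⟩ : ∃ s, v2 = c0 + e * (-2 * c1 + e * s) :=
      ⟨4 * c2 - 8 * e * c3 + 16 * e ^ 2 * c4 - 32 * e ^ 3 * c5 + e ^ 4 * r4, by
        linear_combination h4⟩
    -- for `w = c0 + e a`, `w' = c0 + e a'`, the part of `w² w'` of order two in `e` is
    -- `c0 (a² + 2 a a') + e a² a'`
    have key : ∀ a b : R, (c0 + e * a) ^ 2 * (c0 + e * b) = c0 ^ 3 + e * c0 ^ 2 * (2 * a + b)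
        + e ^ 2 * (c0 * (a ^ 2 + 2 * a * b) + e * a ^ 2 * b) := fun a b => by ring
    have key3 : ∀ a : R, (c0 + e * a) ^ 3 = c0 ^ 3 + e * c0 ^ 2 * (3 * a)
        + e ^ 2 * (c0 * (3 * a ^ 2) + e * a ^ 3) := fun a => by ring
    have e1 := key (c1 + e * z1) (2 * c1 + e * z2)
    have e2 := key3 (c1 + e * z1)
    have e3 := key (-c1 + e * z3) (-2 * c1 + e * z4)
    have e4 := key3 (-c1 + e * z3)
    rw [← k1] at e1 e2
    rw [← k2] at e1
    rw [← k3] at e3 e4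
    rw [← k4] at e3
    refine ⟨36 * (c0 ^ 2 * (2 * z1 + z2) + c0 * ((c1 + e * z1) ^ 2
        + 2 * (c1 + e * z1) * (2 * c1 + e * z2)) + e * (c1 + e * z1) ^ 2 * (2 * c1 + e * z2))
      + 288 * (c0 ^ 2 * (3 * z1) + c0 * (3 * (c1 + e * z1) ^ 2) + e * (c1 + e * z1) ^ 3)
      - 36 * (c0 ^ 2 * (2 * z3 + z4) + c0 * ((-c1 + e * z3) ^ 2
        + 2 * (-c1 + e * z3) * (-2 * c1 + e * z4)) + e * (-c1 + e * z3) ^ 2 * (-2 * c1 + e * z4))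
      - 288 * (c0 ^ 2 * (3 * z3) + c0 * (3 * (-c1 + e * z3) ^ 2) + e * (-c1 + e * z3) ^ 3), ?_⟩
    linear_combination 36 * e1 + 288 * e2 - 36 * e3 - 288 * e4
  obtain ⟨g2, quad⟩ := quad
  obtain ⟨g3, cub⟩ := cub
  -- the bracket, sorted by degree in the `w`s
  have bracket : ∃ g, (1 - e ^ 2 * w2) * S - (1 - e ^ 2 * v2) * T
      = 12 * e ^ 3 * c1 - 192 * e ^ 5 * c0 * c1 + e ^ 7 * (-48 * c5
        - (288 * c0 * c3 + 240 * c1 * c2) + 2016 * c0 ^ 2 * c1) + e ^ 8 * g := by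
    refine ⟨(8 * r1 - r2 - 8 * r3 + r4) + g2 + g3 + ((1 - e ^ 2 * w2) * q - 288 * w1 ^ 3 * w2)
      - ((1 - e ^ 2 * v2) * q' - 288 * v1 ^ 3 * v2), ?_⟩
    linear_combination (1 - e ^ 2 * w2) * hS - (1 - e ^ 2 * v2) * hT + e ^ 2 * lin + e ^ 4 * quad
      + e ^ 6 * cub
  obtain ⟨g, hg⟩ := bracket
  rw [hg]
  set X := -48 * c5 - (288 * c0 * c3 + 240 * c1 * c2) + 2016 * c0 ^ 2 * c1 with hX
  refine ⟨-(16 * e * c0 * X + 1536 * e * c0 ^ 3 * c1 - 8 * e ^ 3 * c0 ^ 2 * X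
    + (1 + 16 * (e ^ 2 * c0) - 8 * (e ^ 2 * c0) ^ 2) * g), ?_⟩
  linear_combination (-e ^ 7) * hX

/-! ### The ring of bounded functions of `ε` -/

/-- The ring of functions `ℝ → ℂ` that are bounded near `0` from the right. -/
def bddRing : Subring (ℝ → ℂ) where
  carrier := {f | f =O[𝓝[>] 0] (fun _ => (1 : ℝ))}
  mul_mem' {f g} hf hg := by simpa using IsBigO.mul hf hg
  one_mem' := isBigO_const_const _ one_ne_zero _
  add_mem' {f g} hf hg := IsBigO.add hf hg
  zero_mem' := isBigO_zero _ _
  neg_mem' {f} hf := IsBigO.neg_left hf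

/-- Evaluation at a point. -/
def evalAt (ε : ℝ) : bddRing →+* ℂ := (Pi.evalRingHom (fun _ : ℝ => ℂ) ε).comp bddRing.subtype

lemma mem_bddRing_of_continuousAt {f : ℝ → ℂ} (hf : ContinuousAt f 0) : f ∈ bddRing :=
  (hf.tendsto.mono_left nhdsWithin_le_nhds).isBigO_one ℝ

/-- The variable `ε` as a bounded function. -/
def epsB : bddRing :=
  ⟨fun ε => (ε : ℂ), mem_bddRing_of_continuousAt Complex.continuous_ofReal.continuousAt⟩

lemma evalAt_epsB (ε : ℝ) : evalAt ε epsB = (ε : ℂ) := rfl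

/-- A bounded function that is `O(ε ^ m)` is divisible by `ε ^ m` in the ring. Elements of the ring
are functions on all of `ℝ`, not germs, so the vanishing at `ε = 0` is a separate hypothesis. -/
lemma pow_dvd_of_isBigO {m : ℕ} (f : bddRing) (h0 : evalAt 0 f = 0)
    (h : (fun ε => evalAt ε f) =O[𝓝[>] 0] (fun ε : ℝ => ε ^ m)) : epsB ^ m ∣ f := by
  have hb : (fun ε : ℝ => evalAt ε f / (ε : ℂ) ^ m) ∈ bddRing := by
    obtain ⟨C, hC⟩ := h.bound
    refine IsBigO.of_bound C ?_
    filter_upwards [hC, self_mem_nhdsWithin] with ε hε hpos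
    have hpos : 0 < ε := hpos
    have : 0 < ‖(ε : ℂ) ^ m‖ := by simp [hpos.ne']
    rw [norm_div, div_le_iff₀ this]
    simpa using hε
  refine ⟨⟨_, hb⟩, Subtype.ext (funext fun ε => ?_)⟩
  change evalAt ε f = (ε : ℂ) ^ m * (evalAt ε f / (ε : ℂ) ^ m)
  rcases eq_or_ne ε 0 with rfl | hε
  · simp [h0]
  · have : (ε : ℂ) ^ m ≠ 0 := by simp [hε]
    field_simp

/-! ### Derivatives and Taylor expansion in the space variable -/

section Taylor

variable {V : ℝ → ℝ → ℂ}

lemma hasDerivAt_dX (hV : ContDiff ℝ (⊤ : ℕ∞) (fun q : ℝ × ℝ => V q.1 q.2)) (x τ : ℝ) :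
    HasDerivAt (fun y => V y τ) (dX V x τ) x := by
  have h : Differentiable ℝ (fun q : ℝ × ℝ => V q.1 q.2) := hV.differentiable (by simp)
  have : DifferentiableAt ℝ (fun y => V y τ) x :=
    (h (x, τ)).comp (f := fun y : ℝ => (y, τ)) x (by fun_prop)
  exact this.hasDerivAt

lemma dX_eq_fderiv (hV : ContDiff ℝ (⊤ : ℕ∞) (fun q : ℝ × ℝ => V q.1 q.2)) (x τ : ℝ) :
    dX V x τ = fderiv ℝ (fun q : ℝ × ℝ => V q.1 q.2) (x, τ) (1, 0) := by
  have h : Differentiable ℝ (fun q : ℝ × ℝ => V q.1 q.2) := hV.differentiable (by simp)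
  have h2 : HasDerivAt (fun y : ℝ => (y, τ)) ((1 : ℝ), (0 : ℝ)) x :=
    (hasDerivAt_id x).prodMk (hasDerivAt_const x τ)
  exact ((h (x, τ)).hasFDerivAt.comp_hasDerivAt (f := fun y : ℝ => (y, τ)) x h2).deriv

lemma contDiff_dX (hV : ContDiff ℝ (⊤ : ℕ∞) (fun q : ℝ × ℝ => V q.1 q.2)) :
    ContDiff ℝ (⊤ : ℕ∞) (fun q : ℝ × ℝ => dX V q.1 q.2) := by
  have : (fun q : ℝ × ℝ => dX V q.1 q.2)
      = fun q => fderiv ℝ (fun q : ℝ × ℝ => V q.1 q.2) q (1, 0) :=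
    funext fun q => dX_eq_fderiv hV q.1 q.2
  rw [this]
  exact (hV.fderiv_right (m := (⊤ : ℕ∞)) (by simp)).clm_apply contDiff_const

lemma contDiff_iterate_dX (hV : ContDiff ℝ (⊤ : ℕ∞) (fun q : ℝ × ℝ => V q.1 q.2)) (j : ℕ) :
    ContDiff ℝ (⊤ : ℕ∞) (fun q : ℝ × ℝ => (dX^[j] V) q.1 q.2) := by
  induction j with
  | zero => exact hV
  | succ j ih =>
    rw [Function.iterate_succ_apply']
    exact contDiff_dX ih

/-- Taylor's formula in `x` with a remainder bound uniform in the base point. Induction on the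
order: the derivative in `h` of the remainder of `V` is the remainder of `∂_x V` of one order
less. -/
lemma exists_taylor_bound (m : ℕ) (hV : ContDiff ℝ (⊤ : ℕ∞) (fun q : ℝ × ℝ => V q.1 q.2)) :
    ∃ C : ℝ, ∀ x τ h : ℝ, |x| ≤ 1 → |τ| ≤ 1 → |h| ≤ 2 →
      ‖V (x + h) τ - ∑ j ∈ Finset.range m, ((h ^ j / (j.factorial : ℝ) : ℝ) : ℂ)
        * (dX^[j] V) x τ‖ ≤ C * |h| ^ m := by
  induction m generalizing V with
  | zero =>
    have hc : IsCompact (Set.Icc (-3 : ℝ) 3 ×ˢ Set.Icc (-1 : ℝ) 1) :=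
      isCompact_Icc.prod isCompact_Icc
    obtain ⟨C, hC⟩ := hc.exists_bound_of_continuousOn hV.continuous.continuousOn
    refine ⟨C, fun x τ h hx hτ hh => ?_⟩
    rw [abs_le] at hx hτ hh
    simpa using hC (x + h, τ) ⟨⟨by linarith, by linarith⟩, ⟨hτ.1, hτ.2⟩⟩
  | succ m ih =>
    obtain ⟨C, hC⟩ := ih (contDiff_dX hV)
    refine ⟨C, fun x τ h hx hτ hh => ?_⟩
    set F : ℝ → ℂ := fun s => V (x + s) τ - ∑ j ∈ Finset.range (m + 1),
      ((s ^ j / (j.factorial : ℝ) : ℝ) : ℂ) * (dX^[j] V) x τ with hF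
    set F' : ℝ → ℂ := fun s => dX V (x + s) τ - ∑ j ∈ Finset.range m,
      ((s ^ j / (j.factorial : ℝ) : ℝ) : ℂ) * (dX^[j] (dX V)) x τ with hF'
    have hder : ∀ s, HasDerivAt F (F' s) s := by
      intro s
      have h1 : HasDerivAt (fun s => V (x + s) τ) (dX V (x + s) τ) s :=
        (hasDerivAt_dX hV (x + s) τ).comp_const_add x s
      refine h1.sub ?_
      simp only [Finset.sum_range_succ']
      have h2 : ∀ j ∈ Finset.range m, HasDerivAt
          (fun s : ℝ => ((s ^ (j + 1) / ((j + 1).factorial : ℝ) : ℝ) : ℂ) * (dX^[j + 1] V) x τ)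
          (((s ^ j / (j.factorial : ℝ) : ℝ) : ℂ) * (dX^[j] (dX V)) x τ) s := by
        intro j _
        have h3 : HasDerivAt (fun s : ℝ => s ^ (j + 1) / ((j + 1).factorial : ℝ))
            (s ^ j / (j.factorial : ℝ)) s := by
          refine ((hasDerivAt_pow (j + 1) s).div_const ((j + 1).factorial : ℝ)).congr_deriv ?_
          have : (j.factorial : ℝ) ≠ 0 := by positivity
          have : (j + 1 : ℝ) ≠ 0 := by positivity
          rw [Nat.factorial_succ]
          push_cast
          field_simp
        exact h3.ofReal_comp.mul_const _
      simpa using (HasDerivAt.fun_sum h2).add_const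
        (((s ^ 0 / (Nat.factorial 0 : ℝ) : ℝ) : ℂ) * (dX^[0] V) x τ)
    have hF0 : F 0 = 0 := by
      simp [hF, Finset.sum_range_succ']
    have hb : ∀ s ∈ Set.uIcc 0 h, ‖F' s‖ ≤ C * |h| ^ m := by
      intro s hs
      have hs' : |s| ≤ |h| := by simpa using Set.abs_sub_left_of_mem_uIcc hs
      have := hC x τ s hx hτ (hs'.trans hh)
      have hC0 : 0 ≤ C := by
        have := (norm_nonneg _).trans (hC x τ 1 hx hτ (by norm_num))
        simpa using this
      exact this.trans (by gcongr)
    have := (convex_uIcc (0 : ℝ) h).norm_image_sub_le_of_norm_hasDerivWithin_le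
      (fun s _ => (hder s).hasDerivWithinAt) hb Set.left_mem_uIcc Set.right_mem_uIcc
    rw [hF0, sub_zero, sub_zero, Real.norm_eq_abs, mul_assoc, ← pow_succ] at this
    exact this

end Taylor

lemma sqrt_one_ninth : ((1 : ℂ) / 9) ^ ((1 : ℂ) / 2) = 1 / 3 := by
  have h9 : ((1 : ℂ) / 9) = (1 / 3 : ℂ) ^ 2 := by norm_num
  have harg : Complex.arg (1 / 3 : ℂ) = 0 := by
    have : (1 / 3 : ℂ) = ((1 / 3 : ℝ) : ℂ) := by norm_num
    rw [this, Complex.arg_ofReal_of_nonneg (by norm_num)]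
  rw [h9, one_div (2 : ℂ)]
  exact Complex.pow_cpow_nat_inv two_ne_zero (by rw [harg]; simp [Real.pi_pos])
    (by rw [harg]; positivity)

/-- The square root is compared with the cubic polynomial `P` through
`(3s - P)(3s + P) = 9s² - P²`, where `9s² - P²` is divisible by `W⁴` and `3s + P → 2`. -/
lemma sqrt_expansion {W : ℝ → ℂ} (hW : Tendsto W (𝓝[>] 0) (𝓝 0)) :
    (fun ε => 3 * ((1 + 16 * W ε - 8 * W ε ^ 2) / 9) ^ ((1 : ℂ) / 2)
      - (1 + 8 * W ε - 36 * W ε ^ 2 + 288 * W ε ^ 3)) =O[𝓝[>] 0] (fun ε => W ε ^ 4) := by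
  set s : ℝ → ℂ := fun ε => ((1 + 16 * W ε - 8 * W ε ^ 2) / 9) ^ ((1 : ℂ) / 2) with hs
  set P : ℝ → ℂ := fun ε => 1 + 8 * W ε - 36 * W ε ^ 2 + 288 * W ε ^ 3 with hP
  have hsq : ∀ ε, s ε ^ 2 = (1 + 16 * W ε - 8 * W ε ^ 2) / 9 := fun ε => by
    simp only [hs]
    rw [one_div]
    exact Complex.cpow_nat_inv_pow _ two_ne_zero
  have hcont : ContinuousAt (fun z : ℂ => 3 * ((1 + 16 * z - 8 * z ^ 2) / 9) ^ ((1 : ℂ) / 2)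
      + (1 + 8 * z - 36 * z ^ 2 + 288 * z ^ 3)) 0 := by
    refine ContinuousAt.add (ContinuousAt.mul continuousAt_const
      (ContinuousAt.cpow (by fun_prop) continuousAt_const ?_)) (by fun_prop)
    refine Or.inl ?_
    norm_num
  have hlim : Tendsto (fun ε => 3 * s ε + P ε) (𝓝[>] 0) (𝓝 2) := by
    have h := hcont.tendsto.comp hW
    have h2 : (3 * ((1 + 16 * (0 : ℂ) - 8 * 0 ^ 2) / 9) ^ ((1 : ℂ) / 2)
      + (1 + 8 * 0 - 36 * 0 ^ 2 + 288 * 0 ^ 3)) = 2 := by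
      have : ((1 + 16 * (0 : ℂ) - 8 * 0 ^ 2) / 9) = 1 / 9 := by norm_num
      rw [this, sqrt_one_ninth]
      norm_num
    rw [h2] at h
    exact h
  have hinv : (fun ε => (3 * s ε + P ε)⁻¹) =O[𝓝[>] 0] (fun _ => (1 : ℂ)) :=
    (hlim.inv₀ two_ne_zero).isBigO_one ℂ
  have hK : (fun ε => -(5904 - 20736 * W ε + 82944 * W ε ^ 2)) =O[𝓝[>] 0] (fun _ => (1 : ℂ)) := by
    have hc : ContinuousAt (fun z : ℂ => -(5904 - 20736 * z + 82944 * z ^ 2)) 0 := by fun_prop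
    exact (hc.tendsto.comp hW).isBigO_one ℂ
  have hprod := ((isBigO_refl (fun ε => W ε ^ 4) (𝓝[>] (0 : ℝ))).mul hK).mul hinv
  refine (hprod.congr' ?_ (by simp))
  filter_upwards [hlim.eventually_ne two_ne_zero] with ε hε
  rw [← div_eq_mul_inv, div_eq_iff hε]
  simp only [hP]
  linear_combination (-9) * hsq ε

/-! ### The discrete profile -/

/-- The slow space variable `ε n - (4/9) ε t`. -/
noncomputable def xE (n : ℤ) (t ε : ℝ) : ℝ := ε * (n : ℝ) - (4 / 9) * ε * t

/-- The slow time variable `(2/135) ε⁵ t`. -/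
noncomputable def tE (t ε : ℝ) : ℝ := (2 / 135) * ε ^ 5 * t

lemma sqrt_two_sq : ((Real.sqrt 2 : ℝ) : ℂ) ^ 2 = 2 := by
  norm_cast
  simp

lemma uEps_eq (U : ℝ → ℝ → ℂ) (ε : ℝ) (n k : ℤ) (t : ℝ) :
    uEps U ε (n + k) t = (2 * Real.sqrt 2 / 3 : ℝ) * Complex.I
      * (1 - (ε : ℂ) ^ 2 * (U (xE n t ε + k * ε) (tE t ε) / 24)) := by
  have hx : ε * ((n + k : ℤ) : ℝ) - (4 / 9) * ε * t = xE n t ε + k * ε := by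
    simp only [xE]; push_cast; ring
  have h2 : ((Real.sqrt 2 : ℝ) : ℂ) ≠ 0 := by simp
  unfold uEps
  rw [hx]
  simp only [tE]
  push_cast
  generalize U (xE n t ε + k * ε) (2 / 135 * ε ^ 5 * t) = u
  field_simp
  linear_combination (36 * (ε : ℂ) ^ 2 * u) * sqrt_two_sq

lemma one_add_uEps_sq (U : ℝ → ℝ → ℂ) (ε : ℝ) (n k : ℤ) (t : ℝ) :
    1 + uEps U ε (n + k) t ^ 2
      = (1 + 16 * ((ε : ℂ) ^ 2 * (U (xE n t ε + k * ε) (tE t ε) / 24))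
        - 8 * ((ε : ℂ) ^ 2 * (U (xE n t ε + k * ε) (tE t ε) / 24)) ^ 2) / 9 := by
  rw [uEps_eq]
  generalize (ε : ℂ) ^ 2 * (U (xE n t ε + k * ε) (tE t ε) / 24) = W
  push_cast
  linear_combination (4 / 9 * (1 - W) ^ 2 * Complex.I ^ 2) * sqrt_two_sq
    + (8 / 9 * (1 - W) ^ 2) * Complex.I_sq

lemma deriv_uEps {U : ℝ → ℝ → ℂ} (hU : ContDiff ℝ (⊤ : ℕ∞) (fun q : ℝ × ℝ => U q.1 q.2))
    (ε : ℝ) (n : ℤ) (t : ℝ) :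
    deriv (fun s : ℝ => uEps U ε n s) t = -((2 * Real.sqrt 2 / 3 : ℝ) * Complex.I)
      * ((ε : ℂ) ^ 2 / 24) * (-(4 / 9) * ε * dX U (xE n t ε) (tE t ε)
        + (2 / 135) * (ε : ℂ) ^ 5 * deriv (fun s : ℝ => U (xE n t ε) s) (tE t ε)) := by
  have h : Differentiable ℝ (fun q : ℝ × ℝ => U q.1 q.2) := hU.differentiable (by simp)
  set L := fderiv ℝ (fun q : ℝ × ℝ => U q.1 q.2) (xE n t ε, tE t ε) with hL
  have hτ : deriv (fun s : ℝ => U (xE n t ε) s) (tE t ε) = L (0, 1) := by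
    have h2 : HasDerivAt (fun s : ℝ => (xE n t ε, s)) ((0 : ℝ), (1 : ℝ)) (tE t ε) :=
      (hasDerivAt_const _ _).prodMk (hasDerivAt_id _)
    exact ((h (xE n t ε, tE t ε)).hasFDerivAt.comp_hasDerivAt
      (f := fun s : ℝ => (xE n t ε, s)) (tE t ε) h2).deriv
  have hcurve : HasDerivAt (fun s : ℝ => (xE n s ε, tE s ε))
      (-(4 / 9) * ε, (2 / 135) * ε ^ 5) t := by
    refine HasDerivAt.prodMk ?_ ?_
    · simpa [xE] using ((hasDerivAt_id t).const_mul ((4 / 9) * ε)).const_sub (ε * (n : ℝ))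
    · simpa [tE] using (hasDerivAt_id t).const_mul ((2 / 135) * ε ^ 5)
  have hcomp : HasDerivAt (fun s : ℝ => U (xE n s ε) (tE s ε))
      (L (-(4 / 9) * ε, (2 / 135) * ε ^ 5)) t :=
    (h (xE n t ε, tE t ε)).hasFDerivAt.comp_hasDerivAt
      (f := fun s : ℝ => (xE n s ε, tE s ε)) t hcurve
  have hlin : L (-(4 / 9) * ε, (2 / 135) * ε ^ 5)
      = -(4 / 9) * ε * dX U (xE n t ε) (tE t ε) + (2 / 135) * (ε : ℂ) ^ 5 * L (0, 1) := by
    have : ((-(4 / 9) * ε, (2 / 135) * ε ^ 5) : ℝ × ℝ)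
        = (-(4 / 9) * ε) • ((1 : ℝ), (0 : ℝ)) + ((2 / 135) * ε ^ 5) • ((0 : ℝ), (1 : ℝ)) := by
      simp
    rw [this, map_add, map_smul, map_smul, dX_eq_fderiv hU, ← hL]
    simp only [Complex.real_smul]
    push_cast
    ring
  have hfun : (fun s : ℝ => uEps U ε n s) = fun s => (2 * Real.sqrt 2 / 3 : ℝ) * Complex.I
      * (1 - (ε : ℂ) ^ 2 * (U (xE n s ε) (tE s ε) / 24)) := by
    funext s
    simpa using uEps_eq U ε n 0 s
  rw [hfun, hτ, ← hlin]
  rw [((((hcomp.div_const 24).const_mul ((ε : ℂ) ^ 2)).const_sub 1).const_mul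
    ((2 * Real.sqrt 2 / 3 : ℝ) * Complex.I)).deriv]
  ring

/-! ### Bounded functions attached to a solution -/

section Coeffs

lemma continuous_node {U : ℝ → ℝ → ℂ}
    (hU : ContDiff ℝ (⊤ : ℕ∞) (fun q : ℝ × ℝ => U q.1 q.2)) (n : ℤ) (t : ℝ) (k : ℤ) :
    Continuous (fun ε : ℝ => U (xE n t ε + k * ε) (tE t ε) / 24) := by
  have : Continuous (fun ε : ℝ => (xE n t ε + k * ε, tE t ε)) := by unfold xE tE; fun_prop
  exact (hU.continuous.comp this).div_const _

variable {U : ℝ → ℝ → ℂ} (hU : ContDiff ℝ (⊤ : ℕ∞) (fun q : ℝ × ℝ => U q.1 q.2))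
  (n : ℤ) (t : ℝ)

/-- The Taylor coefficient `∂_x^j U / (24 j!)` at `(x_ε, τ_ε)`. -/
noncomputable def coeffB (j : ℕ) : bddRing :=
  ⟨fun ε => (dX^[j] U) (xE n t ε) (tE t ε) / (24 * (j.factorial : ℂ)), by
    refine mem_bddRing_of_continuousAt (Continuous.continuousAt ?_)
    have : Continuous (fun ε : ℝ => (xE n t ε, tE t ε)) := by unfold xE tE; fun_prop
    exact ((contDiff_iterate_dX hU j).continuous.comp this).div_const _⟩

/-- The value `U(x_ε + kε, τ_ε) / 24` at the node `k`. -/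
noncomputable def nodeB (k : ℤ) : bddRing :=
  ⟨fun ε => U (xE n t ε + k * ε) (tE t ε) / 24,
    mem_bddRing_of_continuousAt (continuous_node hU n t k).continuousAt⟩

/-- Three times the square root `√(1 + u_ε(n+k,t)²)`, normalised to take the value `1` at
`ε = 0`. -/
noncomputable def rootB (k : ℤ) : bddRing :=
  ⟨fun ε => 3 * (1 + uEps U ε (n + k) t ^ 2) ^ ((1 : ℂ) / 2), by
    refine mem_bddRing_of_continuousAt ?_
    simp only [one_add_uEps_sq]
    have := continuous_node hU n t k
    refine ContinuousAt.mul continuousAt_const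
      (ContinuousAt.cpow (Continuous.continuousAt (by fun_prop)) continuousAt_const (Or.inl ?_))
    norm_num⟩

lemma node_taylor (k : ℤ) (hk : |(k : ℝ)| ≤ 2) :
    epsB ^ 6 ∣ nodeB hU n t k - ∑ j ∈ Finset.range 6,
      (k : bddRing) ^ j * epsB ^ j * coeffB hU n t j := by
  have heval : ∀ ε, evalAt ε (nodeB hU n t k - ∑ j ∈ Finset.range 6,
      (k : bddRing) ^ j * epsB ^ j * coeffB hU n t j)
      = (U (xE n t ε + k * ε) (tE t ε) - ∑ j ∈ Finset.range 6,
        (((k * ε) ^ j / (j.factorial : ℝ) : ℝ) : ℂ) * (dX^[j] U) (xE n t ε) (tE t ε)) / 24 := by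
    intro ε
    have hc : ∀ j, evalAt ε (coeffB hU n t j)
      = (dX^[j] U) (xE n t ε) (tE t ε) / (24 * (j.factorial : ℂ)) := fun j => rfl
    have hw : evalAt ε (nodeB hU n t k) = U (xE n t ε + k * ε) (tE t ε) / 24 := rfl
    rw [map_sub, map_sum, hw, sub_div, Finset.sum_div]
    congr 1
    refine Finset.sum_congr rfl fun j _ => ?_
    have : (j.factorial : ℂ) ≠ 0 := by exact_mod_cast j.factorial_ne_zero
    rw [map_mul, map_mul, map_pow, map_pow, map_intCast, hc, evalAt_epsB]
    push_cast
    rw [mul_pow]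
    field_simp
  refine pow_dvd_of_isBigO _ ?_ ?_
  · rw [heval]
    simp [Finset.sum_range_succ']
  · simp only [heval]
    obtain ⟨C, hC⟩ := exists_taylor_bound 6 hU
    have hC0 : 0 ≤ C := by
      have := (norm_nonneg _).trans (hC 0 0 1 (by simp) (by simp) (by norm_num))
      simpa using this
    have hx : ∀ᶠ ε in 𝓝[>] (0 : ℝ), |xE n t ε| < 1 := by
      have : Continuous (fun ε => |xE n t ε|) := by unfold xE; fun_prop
      exact (this.continuousAt.eventually_lt continuousAt_const (by simp [xE])).filter_mono
        nhdsWithin_le_nhds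
    have ht : ∀ᶠ ε in 𝓝[>] (0 : ℝ), |tE t ε| < 1 := by
      have : Continuous (fun ε => |tE t ε|) := by unfold tE; fun_prop
      exact (this.continuousAt.eventually_lt continuousAt_const (by simp [tE])).filter_mono
        nhdsWithin_le_nhds
    have he : ∀ᶠ ε in 𝓝[>] (0 : ℝ), |ε| < 1 :=
      (continuous_abs.continuousAt.eventually_lt continuousAt_const (by simp)).filter_mono
        nhdsWithin_le_nhds
    refine IsBigO.of_bound (C * 2 ^ 6) ?_
    filter_upwards [hx, ht, he] with ε h1 h2 h3
    have hkε : |k * ε| ≤ 2 * |ε| := by rw [abs_mul]; gcongr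
    have := hC (xE n t ε) (tE t ε) (k * ε) h1.le h2.le (by linarith)
    rw [norm_div, norm_pow, Real.norm_eq_abs]
    calc _ ≤ C * |k * ε| ^ 6 / ‖(24 : ℂ)‖ := by gcongr
      _ ≤ C * |k * ε| ^ 6 := div_le_self (by positivity) (by norm_num)
      _ ≤ C * (2 * |ε|) ^ 6 := by gcongr
      _ = C * 2 ^ 6 * |ε| ^ 6 := by ring

lemma root_expansion (k : ℤ) :
    epsB ^ 8 ∣ rootB hU n t k - (1 + 8 * (epsB ^ 2 * nodeB hU n t k)
      - 36 * (epsB ^ 2 * nodeB hU n t k) ^ 2 + 288 * (epsB ^ 2 * nodeB hU n t k) ^ 3) := by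
  set W : ℝ → ℂ := fun ε => (ε : ℂ) ^ 2 * (U (xE n t ε + k * ε) (tE t ε) / 24) with hW
  have heval : ∀ ε, evalAt ε (rootB hU n t k - (1 + 8 * (epsB ^ 2 * nodeB hU n t k)
      - 36 * (epsB ^ 2 * nodeB hU n t k) ^ 2 + 288 * (epsB ^ 2 * nodeB hU n t k) ^ 3))
      = 3 * ((1 + 16 * W ε - 8 * W ε ^ 2) / 9) ^ ((1 : ℂ) / 2)
      - (1 + 8 * W ε - 36 * W ε ^ 2 + 288 * W ε ^ 3) := by
    intro ε
    have hw : evalAt ε (nodeB hU n t k) = U (xE n t ε + k * ε) (tE t ε) / 24 := rfl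
    have hr : evalAt ε (rootB hU n t k)
      = 3 * (1 + uEps U ε (n + k) t ^ 2) ^ ((1 : ℂ) / 2) := rfl
    simp only [map_sub, map_add, map_mul, map_pow, map_one, map_ofNat, hw, hr, evalAt_epsB,
      one_add_uEps_sq, hW]
  have hWc : Continuous W := by
    have := continuous_node hU n t k
    fun_prop
  have hW0 : Tendsto W (𝓝[>] 0) (𝓝 0) := by
    have := hWc.tendsto 0
    simp only [hW] at this
    simpa using this.mono_left nhdsWithin_le_nhds
  refine pow_dvd_of_isBigO _ ?_ ?_
  · have hz : W 0 = 0 := by simp [hW]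
    have h9 : ((1 + 16 * (0 : ℂ) - 8 * 0 ^ 2) / 9) = 1 / 9 := by norm_num
    rw [heval, hz, h9, sqrt_one_ninth]
    norm_num
  · simp only [heval]
    refine (sqrt_expansion hW0).trans ?_
    have hb : (fun ε => U (xE n t ε + k * ε) (tE t ε) / 24) =O[𝓝[>] 0] (fun _ => (1 : ℝ)) :=
      (nodeB hU n t k).2
    have he : (fun ε : ℝ => (ε : ℂ) ^ 2) =O[𝓝[>] 0] (fun ε : ℝ => ε ^ 2) :=
      IsBigO.of_bound 1 (by simp)
    refine ((he.mul hb).pow 4).congr_right fun ε => ?_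
    ring

end Coeffs

/-- The discrete Kaup–Kupershmidt equation has the Kaup–Kupershmidt equation
`U_τ = 5U²U_x + (25/2)U_xU_{xx} + 5UU_{xxx} + U_{xxxxx}` as its continuous limit:
substituting `u_ε` into the discrete equation leaves a residue which is `o(ε⁷)` as
`ε → 0⁺` (the complex square root is taken on the principal branch, via `cpow`). -/
theorem dKK_continuous_limit (U : ℝ → ℝ → ℂ)
    (hU : ContDiff ℝ (⊤ : ℕ∞) (fun q : ℝ × ℝ => U q.1 q.2))
    (hKK : ∀ x τ : ℝ, deriv (fun s : ℝ => U x s) τ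
      = 5 * (U x τ)^2 * dX U x τ + (25/2) * dX U x τ * dX (dX U) x τ
        + 5 * U x τ * (dX^[3] U) x τ + (dX^[5] U) x τ)
    (n : ℤ) (t : ℝ) :
    (fun ε : ℝ =>
        deriv (fun s : ℝ => uEps U ε n s) t
          - (1 + (uEps U ε n t)^2) *
              (uEps U ε (n+2) t * (1 + (uEps U ε (n+1) t)^2) ^ ((1:ℂ)/2)
                - uEps U ε (n-2) t * (1 + (uEps U ε (n-1) t)^2) ^ ((1:ℂ)/2)))
      =o[nhdsWithin 0 (Set.Ioi 0)] (fun ε : ℝ => ε^7) := by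
  have hdvd := residue_dvd epsB (coeffB hU n t 0) (coeffB hU n t 1) (coeffB hU n t 2)
    (coeffB hU n t 3) (coeffB hU n t 4) (coeffB hU n t 5) (nodeB hU n t 1) (nodeB hU n t 2)
    (nodeB hU n t (-1)) (nodeB hU n t (-2)) (rootB hU n t 1) (rootB hU n t (-1))
    (by
      convert node_taylor hU n t 1 (by norm_num) using 2
      simp only [Finset.sum_range_succ, Finset.sum_range_zero]; push_cast; ring)
    (by
      convert node_taylor hU n t 2 (by norm_num) using 2
      simp only [Finset.sum_range_succ, Finset.sum_range_zero]; push_cast; ring)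
    (by
      convert node_taylor hU n t (-1) (by norm_num) using 2
      simp only [Finset.sum_range_succ, Finset.sum_range_zero]; push_cast; ring)
    (by
      convert node_taylor hU n t (-2) (by norm_num) using 2
      simp only [Finset.sum_range_succ, Finset.sum_range_zero]; push_cast; ring)
    (root_expansion hU n t 1) (root_expansion hU n t (-1))
  obtain ⟨G, hG⟩ := hdvd
  set κ : ℂ := (2 * Real.sqrt 2 / 3 : ℝ) * Complex.I with hκ
  have hmain : ∀ ε : ℝ, deriv (fun s : ℝ => uEps U ε n s) t
          - (1 + (uEps U ε n t)^2) *
              (uEps U ε (n+2) t * (1 + (uEps U ε (n+1) t)^2) ^ ((1:ℂ)/2)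
                - uEps U ε (n-2) t * (1 + (uEps U ε (n-1) t)^2) ^ ((1:ℂ)/2))
      = κ / 27 * ((ε : ℂ) ^ 8 * G.1 ε) := by
    intro ε
    have hE := congrArg (evalAt ε) hG
    have hc : ∀ j, evalAt ε (coeffB hU n t j)
      = (dX^[j] U) (xE n t ε) (tE t ε) / (24 * (j.factorial : ℂ)) := fun j => rfl
    have hw : ∀ k, evalAt ε (nodeB hU n t k) = U (xE n t ε + k * ε) (tE t ε) / 24 := fun k => rfl
    have hr : ∀ k, evalAt ε (rootB hU n t k)
      = 3 * (1 + uEps U ε (n + k) t ^ 2) ^ ((1 : ℂ) / 2) := fun k => rfl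
    have hg : evalAt ε G = G.1 ε := rfl
    simp only [map_sub, map_add, map_mul, map_pow, map_one, map_ofNat, hc, hw, hr, hg,
      evalAt_epsB] at hE
    rw [← hE, deriv_uEps hU, hKK]
    have h0 := one_add_uEps_sq U ε n 0 t
    simp only [add_zero, Int.cast_zero, zero_mul] at h0
    rw [h0, uEps_eq U ε n 2 t, sub_eq_add_neg n 2, sub_eq_add_neg n 1, uEps_eq U ε n (-2) t, ← hκ]
    -- the two sides now agree as polynomials in the roots and the derivatives
    generalize (1 + uEps U ε (n + 1) t ^ 2) ^ ((1 : ℂ) / 2) = s1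
    generalize (1 + uEps U ε (n + -1) t ^ 2) ^ ((1 : ℂ) / 2) = s2
    simp only [Function.iterate_zero, Function.iterate_one, id, Nat.factorial,
      show dX^[2] U = dX (dX U) from rfl]
    push_cast
    ring
  have hbig : (fun ε : ℝ => κ / 27 * ((ε : ℂ) ^ 8 * G.1 ε)) =O[𝓝[>] 0] (fun ε : ℝ => ε ^ 8) := by
    have he : (fun ε : ℝ => (ε : ℂ) ^ 8) =O[𝓝[>] 0] (fun ε : ℝ => ε ^ 8) :=
      IsBigO.of_bound 1 (by simp)
    have hG' : G.1 =O[𝓝[>] 0] (fun _ => (1 : ℝ)) := G.2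
    simpa using (he.mul hG').const_mul_left (κ / 27)
  simp only [hmain]
  exact hbig.trans_isLittleO ((isLittleO_pow_pow (by norm_num)).mono nhdsWithin_le_nhds)
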